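/- Let G₁,…,G_n be nontrivial (at least two vertices) simple strongly connected digraphs, with G_i being d_i-regular, such that each G_i admits a bandwidth optimal shortest-path reduce-scatter schedule. Then the Cartesian product G₁□⋯□G_n (which is (d₁+⋯+d_n)-regular) admits a bandwidth optimal shortest-path reduce-scatter schedule. -/

import Mathlib

open MeasureTheory

namespace Collective

/-- A communication tuple `((w,C),(u,v),t)`. -/
abbrev Tup (V : Type*) := V × Set ℝ × (V × V) × ℕ

/-- A schedule is a set of communication tuples. -/
abbrev Sched (V : Type*) := Set (Tup V)

/-- The data shard, identified with the interval `[0,1)`. -/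
def shard : Set ℝ := Set.Ico (0 : ℝ) 1

/-- `A` is a valid (finite) schedule on the digraph with edge relation `E`:
every tuple uses an edge, its chunk is a measurable subset of the shard, and
its communication step is at least `1`. -/
def IsSched {V : Type*} (E : V → V → Prop) (A : Sched V) : Prop :=
  A.Finite ∧ ∀ p ∈ A, E p.2.2.1.1 p.2.2.1.2 ∧ p.2.1 ⊆ shard ∧
    MeasurableSet p.2.1 ∧ 1 ≤ p.2.2.2

/-- The maximum communication step occurring in a schedule. -/
noncomputable def tmax {V : Type*} (A : Sched V) : ℕ :=
  sSup {t | ∃ p ∈ A, p.2.2.2 = t}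

/-- `A` is a reduce-scatter schedule. -/
def IsReduceScatter {V : Type*} (A : Sched V) : Prop :=
  ∀ u v : V, u ≠ v → ∀ x ∈ shard,
    ∃ (m : ℕ) (w : Fin (m + 1) → V) (C : Fin m → Set ℝ) (t : Fin m → ℕ),
      w 0 = u ∧ w (Fin.last m) = v ∧ StrictMono t ∧
      ∀ i : Fin m, (v, C i, (w i.castSucc, w i.succ), t i) ∈ A ∧ x ∈ C i

/-- `A` is an allgather schedule. -/
def IsAllgather {V : Type*} (A : Sched V) : Prop :=
  ∀ u v : V, u ≠ v → ∀ x ∈ shard,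
    ∃ (m : ℕ) (w : Fin (m + 1) → V) (C : Fin m → Set ℝ) (t : Fin m → ℕ),
      w 0 = u ∧ w (Fin.last m) = v ∧ StrictMono t ∧
      ∀ i : Fin m, (u, C i, (w i.castSucc, w i.succ), t i) ∈ A ∧ x ∈ C i

/-- A digraph is `d`-regular if every vertex has out-degree `d` and in-degree `d`. -/
def IsRegular {V : Type*} (E : V → V → Prop) (d : ℕ) : Prop :=
  ∀ v : V, {w | E v w}.ncard = d ∧ {w | E w v}.ncard = d

/-- Node latency `T_L(A) = t_max · α`. -/
noncomputable def latT {V : Type*} (α : ℝ) (A : Sched V) : ℝ := (tmax A : ℝ) * α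

/-- Total chunk length sent over edge `e` at step `t`. -/
noncomputable def edgeLoad {V : Type*} (A : Sched V) (e : V × V) (t : ℕ) : ℝ :=
  ∑ᶠ p ∈ {p : Tup V | p ∈ A ∧ p.2.2.1 = e ∧ p.2.2.2 = t}, (volume p.2.1).toReal

/-- Bandwidth runtime of step `t`:
`T_B(A_t,M,B) = (d/B)·(M/N)·max_{(u,v)∈E} Σ_{((w,C),(u,v),t)∈A_t} |C|`. -/
noncomputable def stepT {V : Type*} (E : V → V → Prop) (d : ℕ) (M B : ℝ)
    (A : Sched V) (t : ℕ) : ℝ :=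
  ((d : ℝ) / B) * (M / (Nat.card V : ℝ)) *
    sSup ((fun e => edgeLoad A e t) '' {e : V × V | E e.1 e.2})

/-- Bandwidth runtime `T_B(A,M,B) = Σ_{t=1}^{t_max} T_B(A_t,M,B)`. -/
noncomputable def bwT {V : Type*} (E : V → V → Prop) (d : ℕ) (M B : ℝ)
    (A : Sched V) : ℝ :=
  ∑ t ∈ Finset.Icc 1 (tmax A), stepT E d M B A t

/-- There is a directed walk of length `n` from `u` to `v`. -/
def HasWalk {V : Type*} (E : V → V → Prop) (u v : V) (n : ℕ) : Prop :=
  ∃ w : Fin (n + 1) → V, w 0 = u ∧ w (Fin.last n) = v ∧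
    ∀ i : Fin n, E (w i.castSucc) (w i.succ)

/-- Strong connectivity. -/
def StronglyConnected {V : Type*} (E : V → V → Prop) : Prop :=
  ∀ u v : V, ∃ n, HasWalk E u v n

/-- Directed graph distance: the length of a shortest directed walk. -/
noncomputable def dist {V : Type*} (E : V → V → Prop) (u v : V) : ℕ :=
  sInf {n | HasWalk E u v n}

/-- Diameter `D(G) = max_{u,v} d(u,v)`. -/
noncomputable def diam {V : Type*} (E : V → V → Prop) : ℕ :=
  sSup {n | ∃ u v : V, dist E u v = n}

/-- `A` is a shortest-path (reduce-scatter style) schedule: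
`((v,C),(u,w),t) ∈ A` iff `d(u,v) = d(w,v)+1 = D(G)+1−t`. -/
def IsShortestPathSched {V : Type*} (E : V → V → Prop) (A : Sched V) : Prop :=
  (∀ (v : V) (C : Set ℝ) (u w : V) (t : ℕ), (v, C, (u, w), t) ∈ A →
      dist E u v = dist E w v + 1 ∧ dist E u v + t = diam E + 1) ∧
  (∀ (v u w : V) (t : ℕ), E u w → dist E u v = dist E w v + 1 →
      dist E u v + t = diam E + 1 → ∃ C : Set ℝ, (v, C, (u, w), t) ∈ A)

/-- The transpose digraph. -/
def transpose {V : Type*} (E : V → V → Prop) : V → V → Prop := fun u v => E v u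

/-- The reverse schedule `A^T`: `((w,C),(v,u),t_max−t+1) ∈ A^T` iff `((w,C),(u,v),t) ∈ A`. -/
noncomputable def reverseSched {V : Type*} (A : Sched V) : Sched V :=
  (fun q : Tup V => (q.1, q.2.1, (q.2.2.1.2, q.2.2.1.1), tmax A + 1 - q.2.2.2)) '' A

/-- The schedule obtained by relabeling vertices along `f`. -/
def mapSched {V : Type*} (f : V ≃ V) (A : Sched V) : Sched V :=
  (fun q : Tup V => (f q.1, q.2.1, (f q.2.2.1.1, f q.2.2.1.2), q.2.2.2)) '' A

/-- The vertex set of the line graph `L(G)`: the edges of `G`. -/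
def lineV {V : Type*} (E : V → V → Prop) : Type _ := {e : V × V // E e.1 e.2}

/-- The edge relation of the line graph: `uu' → vv'` iff `u' = v`. -/
def lineE {V : Type*} (E : V → V → Prop) : lineV E → lineV E → Prop :=
  fun e f => e.1.2 = f.1.1

/-- The line-graph-expanded schedule `A_{L(G)}`. -/
noncomputable def lineSched {V : Type*} (E : V → V → Prop) (A : Sched V) :
    Sched (lineV E) :=
  {p | (∃ (v v' w u u' : V) (C : Set ℝ) (t : ℕ)
          (hvv' : E v v') (hwu : E w u) (huu' : E u u'),
          (v, C, (u, u'), t) ∈ A ∧ (v, v') ≠ (w, u) ∧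
          p = (⟨(v, v'), hvv'⟩, C, (⟨(w, u), hwu⟩, ⟨(u, u'), huu'⟩), t))
     ∨ (∃ (u v v' : V) (huv : E u v) (hvv' : E v v'),
          (u, v) ≠ (v, v') ∧
          p = (⟨(v, v'), hvv'⟩, shard, (⟨(u, v), huv⟩, ⟨(v, v'), hvv'⟩), tmax A + 1))}

/-- A digraph bundled with a schedule, used to iterate line graph expansion. -/
structure Alg : Type 1 where
  V : Type
  E : V → V → Prop
  A : Sched V

/-- One application of line graph expansion to a bundled algorithm. -/
noncomputable def lineAlg (G : Alg) : Alg :=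
  ⟨lineV G.E, lineE G.E, lineSched G.E G.A⟩

/-- The degree-expanded digraph `G*n`. -/
def degE {V : Type*} (E : V → V → Prop) (n : ℕ) :
    (V × Fin n) → (V × Fin n) → Prop :=
  fun a b => E a.1 b.1

/-- The degree-expanded schedule `A_{G*n}`, relative to an enumeration `enum` of the
out-edges of each vertex of `G*n`. -/
noncomputable def degSched {V : Type*} (A : Sched V) (n d : ℕ)
    (enum : V × Fin n → Fin (n * d) → V × Fin n) : Sched (V × Fin n) :=
  {p | (∃ (u : V) (i j : Fin n) (β : Fin (n * d)), i ≠ j ∧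
          p = ((u, j),
               Set.Ico (((β : ℕ) : ℝ) / ((n : ℝ) * (d : ℝ)))
                 ((((β : ℕ) : ℝ) + 1) / ((n : ℝ) * (d : ℝ))),
               ((u, i), enum (u, i) β), 1))
     ∨ (∃ (w u v : V) (C : Set ℝ) (t : ℕ) (i j : Fin n),
          (w, C, (u, v), t) ∈ A ∧ p = ((w, j), C, ((u, i), (v, j)), t + 1))}

/-- The edge relation of the Cartesian power `G^{□n}`. -/
def powE {V : Type*} (E : V → V → Prop) (n : ℕ) :
    (Fin n → V) → (Fin n → V) → Prop :=
  fun u v => ∃ j : Fin n, E (u j) (v j) ∧ ∀ k : Fin n, k ≠ j → u k = v k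

/-- Cyclic rotation of coordinates by `i`. -/
def rot {V : Type*} {n : ℕ} (i : Fin n) (v : Fin n → V) : Fin n → V :=
  fun k => v (k - i)

/-- The Cartesian power allgather schedule `A_{G^{□n}}`: the `i`-th of the `n` schedules
`A^{(i)}` (a coordinate rotation of `A^{(1)}`) is run on the `i`-th equal subshard. -/
noncomputable def powSched {V : Type*} (A : Sched V) (n : ℕ) : Sched (Fin n → V) :=
  {p | ∃ (i j : Fin n) (w u v : V) (C : Set ℝ) (t : ℕ) (a b : Fin n → V),
        (w, C, (u, v), t) ∈ A ∧ a j = w ∧ b j = u ∧ (∀ k : Fin n, j < k → a k = b k) ∧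
        p = (rot i a, (fun x : ℝ => (((i : ℕ) : ℝ) + x) / (n : ℝ)) '' C,
             (rot i b, rot i (Function.update b j v)), t + (j : ℕ) * tmax A)}

/-- The edge relation of the Cartesian product `G₁□⋯□G_n` of a family of digraphs. -/
def boxE {n : ℕ} {V : Fin n → Type*} (E : ∀ i, V i → V i → Prop) :
    (∀ i, V i) → (∀ i, V i) → Prop :=
  fun u v => ∃ j : Fin n, E j (u j) (v j) ∧ ∀ k : Fin n, k ≠ j → u k = v k

/-- The generalized Kautz digraph `Π_{d,m}` on `ℤ/mℤ`:
`x → y` iff `y ≡ −d·x − a (mod m)` for some `a ∈ {1,…,d}`. -/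
def kautzE (d m : ℕ) : ZMod m → ZMod m → Prop :=
  fun x y => ∃ a : ℕ, 1 ≤ a ∧ a ≤ d ∧ y = -(d : ZMod m) * x - (a : ZMod m)

end Collective
namespace Collective

section Walks

variable {V : Type*} {E : V → V → Prop}

lemma hasWalk_zero {u v : V} : HasWalk E u v 0 ↔ u = v := by
  constructor
  · rintro ⟨w, h0, h1, -⟩
    rw [← h0, ← h1]; rfl
  · rintro rfl
    exact ⟨fun _ => u, rfl, rfl, fun i => i.elim0⟩

lemma hasWalk_succ {u v : V} {n : ℕ} :
    HasWalk E u v (n + 1) ↔ ∃ w, E u w ∧ HasWalk E w v n := by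
  constructor
  · rintro ⟨w, h0, h1, h⟩
    refine ⟨w 1, ?_, fun i => w i.succ, rfl, ?_, fun i => ?_⟩
    · have := h 0
      simpa [h0] using this
    · rw [← h1]; rfl
    · exact h i.succ
  · rintro ⟨w, he, p, h0, h1, h⟩
    refine ⟨Fin.cons u p, rfl, ?_, fun i => ?_⟩
    · rw [← Fin.succ_last, Fin.cons_succ, h1]
    · refine Fin.cases ?_ (fun j => ?_) i
      · simpa [h0] using he
      · have := h j
        rw [← Fin.succ_castSucc, Fin.cons_succ, Fin.cons_succ]
        exact this

lemma dist_le {u v : V} {n : ℕ} (h : HasWalk E u v n) : dist E u v ≤ n :=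
  Nat.sInf_le h

lemma hasWalk_dist (hsc : StronglyConnected E) (u v : V) : HasWalk E u v (dist E u v) :=
  Nat.sInf_mem (s := {n | HasWalk E u v n}) (hsc u v)

lemma dist_self (u : V) : dist E u u = 0 :=
  Nat.le_zero.1 (dist_le (hasWalk_zero.2 rfl))

lemma dist_eq_zero (hsc : StronglyConnected E) {u v : V} : dist E u v = 0 ↔ u = v := by
  constructor
  · intro h
    have := hasWalk_dist hsc u v
    rw [h] at this
    exact hasWalk_zero.1 this
  · rintro rfl; exact dist_self u

lemma dist_le_of_edge (hsc : StronglyConnected E) {u w : V} (v : V) (h : E u w) :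
    dist E u v ≤ dist E w v + 1 :=
  dist_le (hasWalk_succ.2 ⟨w, h, hasWalk_dist hsc w v⟩)

lemma exists_edge_of_dist (hsc : StronglyConnected E) {u v : V} {s : ℕ}
    (h : dist E u v = s + 1) : ∃ w, E u w ∧ dist E w v = s := by
  have h1 := hasWalk_dist hsc u v
  rw [h] at h1
  obtain ⟨w, hw, h2⟩ := hasWalk_succ.1 h1
  refine ⟨w, hw, ?_⟩
  have := dist_le h2
  have := dist_le_of_edge hsc v hw
  omega

lemma dist_eq_one (hsc : StronglyConnected E) (hs : ∀ v, ¬ E v v) {u v : V} :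
    dist E u v = 1 ↔ E u v := by
  constructor
  · intro h
    obtain ⟨w, hw, h0⟩ := exists_edge_of_dist hsc (s := 0) h
    rw [dist_eq_zero hsc] at h0
    exact h0 ▸ hw
  · intro h
    have h1 := dist_le_of_edge hsc v h
    rw [dist_self] at h1
    have h2 : dist E u v ≠ 0 := by
      intro h0
      rw [dist_eq_zero hsc] at h0
      subst h0
      exact hs _ h
    omega

lemma bddAbove_dist [Finite V] : BddAbove {n | ∃ u v : V, dist E u v = n} := by
  have : {n | ∃ u v : V, dist E u v = n} = Set.range (fun p : V × V => dist E p.1 p.2) := by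
    ext n; simp
  rw [this]
  exact (Set.finite_range _).bddAbove

lemma dist_le_diam [Finite V] (u v : V) : dist E u v ≤ diam E :=
  le_csSup bddAbove_dist ⟨u, v, rfl⟩

lemma hasWalk_equiv {W : Type*} {F : W → W → Prop} (e : V ≃ W)
    (he : ∀ a b, E a b ↔ F (e a) (e b)) (u v : V) (n : ℕ) :
    HasWalk F (e u) (e v) n ↔ HasWalk E u v n := by
  induction n generalizing u with
  | zero => simp [hasWalk_zero]
  | succ n ih =>
    rw [hasWalk_succ, hasWalk_succ, ← e.exists_congr_right]
    simp only [ih, he]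

lemma dist_equiv {W : Type*} {F : W → W → Prop} (e : V ≃ W)
    (he : ∀ a b, E a b ↔ F (e a) (e b)) (u v : V) :
    dist F (e u) (e v) = dist E u v := by
  unfold dist
  simp only [hasWalk_equiv e he]

/-- binary Cartesian product. -/
def prodE {W : Type*} (E : V → V → Prop) (F : W → W → Prop) : V × W → V × W → Prop :=
  fun a b => (E a.1 b.1 ∧ a.2 = b.2) ∨ (a.1 = b.1 ∧ F a.2 b.2)

lemma hasWalk_prod {W : Type*} {F : W → W → Prop} (a b : V × W) (n : ℕ) :
    HasWalk (prodE E F) a b n ↔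
      ∃ k l, k + l = n ∧ HasWalk E a.1 b.1 k ∧ HasWalk F a.2 b.2 l := by
  constructor
  · induction n generalizing a with
    | zero =>
      intro h
      rw [hasWalk_zero] at h
      subst h
      exact ⟨0, 0, rfl, hasWalk_zero.2 rfl, hasWalk_zero.2 rfl⟩
    | succ n ih =>
      intro h
      obtain ⟨c, hc, h⟩ := hasWalk_succ.1 h
      obtain ⟨k, l, hkl, h1, h2⟩ := ih c h
      rcases hc with ⟨hc, hc'⟩ | ⟨hc', hc⟩
      · exact ⟨k + 1, l, by omega, hasWalk_succ.2 ⟨_, hc, h1⟩, hc' ▸ h2⟩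
      · exact ⟨k, l + 1, by omega, hc' ▸ h1, hasWalk_succ.2 ⟨_, hc, h2⟩⟩
  · rintro ⟨k, l, rfl, h1, h2⟩
    induction k generalizing a with
    | zero =>
      rw [hasWalk_zero] at h1
      rw [Nat.zero_add]
      induction l generalizing a with
      | zero =>
        rw [hasWalk_zero] at h2 ⊢
        exact Prod.ext h1 h2
      | succ l ih =>
        obtain ⟨c, hc, h⟩ := hasWalk_succ.1 h2
        exact hasWalk_succ.2 ⟨(a.1, c), Or.inr ⟨rfl, hc⟩, ih (a.1, c) h1 h⟩
    | succ k ih =>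
      obtain ⟨c, hc, h⟩ := hasWalk_succ.1 h1
      rw [Nat.add_right_comm]
      exact hasWalk_succ.2 ⟨(c, a.2), Or.inl ⟨hc, rfl⟩, ih (c, a.2) h h2⟩

lemma sc_prod {W : Type*} {F : W → W → Prop} (h1 : StronglyConnected E)
    (h2 : StronglyConnected F) : StronglyConnected (prodE E F) := fun a b =>
  ⟨_, (hasWalk_prod a b _).2 ⟨_, _, rfl, hasWalk_dist h1 _ _, hasWalk_dist h2 _ _⟩⟩

lemma dist_prod {W : Type*} {F : W → W → Prop} (h1 : StronglyConnected E)
    (h2 : StronglyConnected F) (a b : V × W) :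
    dist (prodE E F) a b = dist E a.1 b.1 + dist F a.2 b.2 := by
  apply le_antisymm
  · exact dist_le ((hasWalk_prod a b _).2
      ⟨_, _, rfl, hasWalk_dist h1 _ _, hasWalk_dist h2 _ _⟩)
  · obtain ⟨k, l, h, hk, hl⟩ := (hasWalk_prod a b _).1 (hasWalk_dist (sc_prod h1 h2) a b)
    have := dist_le hk
    have := dist_le hl
    omega

end Walks

section Good

open Finset
open scoped Classical

/-- numerical form of a bandwidth optimal shortest-path reduce-scatter schedule. -/
structure Good {V : Type*} [Fintype V] (E : V → V → Prop) (d : ℕ) : Prop where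
  simple : ∀ v, ¬ E v v
  sc : StronglyConnected E
  reg : IsRegular E d
  ex : ∃ (N : ℕ → ℝ) (f : V → V → V → ℝ),
    (∀ u s, ((univ.filter (fun v => dist E u v = s)).card : ℝ) = N s) ∧
    (∀ u v w, 0 ≤ f u v w) ∧
    (∀ u v w, f u v w ≠ 0 → E u w ∧ dist E u v = dist E w v + 1) ∧
    (∀ u v, u ≠ v → ∑ w, f u v w = 1) ∧
    (∀ u w, E u w → ∀ s, 1 ≤ s →
      (d : ℝ) * ∑ v ∈ univ.filter (fun v => dist E u v = s), f u v w = N s)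

lemma good_equiv {V W : Type*} [Fintype V] [Fintype W] {E : V → V → Prop}
    {F : W → W → Prop} {d : ℕ} (e : V ≃ W) (he : ∀ a b, E a b ↔ F (e a) (e b))
    (h : Good E d) : Good F d := by
  have he' : ∀ a b, F a b ↔ E (e.symm a) (e.symm b) := fun a b => by simp [he]
  have hd : ∀ a b, dist F a b = dist E (e.symm a) (e.symm b) := fun a b => by
    rw [← dist_equiv e he]; simp
  refine ⟨fun v hv => h.simple _ ((he' _ _).1 hv), fun u v => ?_, fun v => ?_, ?_⟩
  · obtain ⟨n, hn⟩ := h.sc (e.symm u) (e.symm v)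
    refine ⟨n, ?_⟩
    rw [← hasWalk_equiv e he] at hn
    simpa using hn
  · obtain ⟨h1, h2⟩ := h.reg (e.symm v)
    constructor
    · rw [← h1, ← Set.ncard_image_of_injective _ e.injective]
      congr 1; ext w
      simp [he', Equiv.image_eq_preimage_symm]
    · rw [← h2, ← Set.ncard_image_of_injective _ e.injective]
      congr 1; ext w
      simp [he', Equiv.image_eq_preimage_symm]
  · obtain ⟨N, f, h1, h2, h3, h4, h5⟩ := h.ex
    refine ⟨N, fun u v w => f (e.symm u) (e.symm v) (e.symm w), ?_, ?_, ?_, ?_, ?_⟩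
    · intro u s
      rw [← h1 (e.symm u) s, ← Finset.sum_boole, ← Finset.sum_boole, ← Equiv.sum_comp e.symm]
      simp only [hd]
    · intro u v w; exact h2 _ _ _
    · intro u v w hne
      rw [he', hd, hd]
      exact h3 _ _ _ hne
    · intro u v huv
      rw [Equiv.sum_comp e.symm (fun w => f (e.symm u) (e.symm v) w)]
      exact h4 _ _ (fun h => huv (e.symm.injective h))
    · intro u w huw s hs
      rw [← h5 (e.symm u) (e.symm w) ((he' _ _).1 huw) s hs, Finset.sum_filter,
        Finset.sum_filter, ← Equiv.sum_comp e.symm]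
      simp only [hd]

lemma sum_prod_dist {V W : Type*} [Fintype V] [Fintype W] (d1 : V → ℕ) (d2 : W → ℕ)
    (g : ℕ → ℕ → ℝ) (h : V → ℝ) (k : W → ℝ) (s : ℕ) :
    ∑ v ∈ univ.filter (fun v : V × W => d1 v.1 + d2 v.2 = s),
      g (d1 v.1) (d2 v.2) * (h v.1 * k v.2) =
    ∑ p ∈ antidiagonal s, g p.1 p.2 *
      ((∑ v ∈ univ.filter (fun v => d1 v = p.1), h v) *
        (∑ v ∈ univ.filter (fun v => d2 v = p.2), k v)) := by
  rw [← Finset.sum_fiberwise_of_maps_to (g := fun v : V × W => (d1 v.1, d2 v.2))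
    (t := antidiagonal s) (by intro x hx; simpa using hx)]
  refine Finset.sum_congr rfl fun p hp => ?_
  have hp' : p.1 + p.2 = s := by simpa using hp
  have : (univ.filter (fun v : V × W => d1 v.1 + d2 v.2 = s)).filter
      (fun v => (d1 v.1, d2 v.2) = p) =
      (univ.filter (fun v => d1 v = p.1)) ×ˢ (univ.filter (fun v => d2 v = p.2)) := by
    ext ⟨x, y⟩
    simp only [mem_filter, mem_univ, true_and, mem_product, Prod.ext_iff]
    constructor
    · rintro ⟨-, h⟩; exact h
    · rintro ⟨h1, h2⟩; exact ⟨by omega, h1, h2⟩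
  rw [this, Finset.sum_mul_sum, Finset.mul_sum, Finset.sum_product]
  refine Finset.sum_congr rfl fun x hx => ?_
  rw [Finset.mul_sum]
  refine Finset.sum_congr rfl fun y hy => ?_
  simp only [mem_filter, mem_univ, true_and] at hx hy
  rw [hx, hy]

lemma interp (P Q c e : ℝ) (h1 : e * P ≤ c) (h2 : c ≤ e * Q) :
    ∃ θ : ℝ, 0 ≤ θ ∧ θ ≤ 1 ∧ e * ((1 - θ) * P + θ * Q) = c := by
  rcases eq_or_lt_of_le (h1.trans h2) with h | h
  · exact ⟨0, le_rfl, zero_le_one, by linarith⟩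
  · have hpos : 0 < e * Q - e * P := by linarith
    refine ⟨(c - e * P) / (e * Q - e * P), div_nonneg (by linarith) hpos.le,
      (div_le_one hpos).2 (by linarith), ?_⟩
    have : (c - e * P) / (e * Q - e * P) * (e * Q - e * P) = c - e * P :=
      div_mul_cancel₀ _ hpos.ne'
    linear_combination this

/-- numerical growth facts about a good digraph -/
lemma hall_bound (N1 N2 : ℕ → ℝ) (d1 d2 : ℝ) (hd1 : 0 ≤ d1) (hd2 : 0 ≤ d2)
    (h1 : ∀ s, 0 ≤ N1 s) (h2 : ∀ s, 0 ≤ N2 s) (h20 : N2 0 = 1)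
    (h21 : N2 1 = d2) (hg : ∀ s, N1 (s + 1) ≤ d1 * N1 s) (s : ℕ) :
    (d1 + d2) * N1 (s + 1) ≤ d1 * ∑ p ∈ antidiagonal (s + 1), N1 p.1 * N2 p.2 := by
  rw [Finset.Nat.sum_antidiagonal_succ']
  have := Finset.single_le_sum (s := antidiagonal s)
    (f := fun p : ℕ × ℕ => N1 p.1 * N2 (p.2 + 1))
    (fun p _ => mul_nonneg (h1 _) (h2 _)) (a := (s, 0)) (by simp)
  simp only [zero_add, h21] at this
  simp only [h20]
  have h3 := mul_le_mul_of_nonneg_left this hd1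
  have h4 := mul_le_mul_of_nonneg_left (hg s) hd2
  nlinarith

lemma exists_theta (N1 N2 : ℕ → ℝ) (d1 d2 : ℝ) (hd1 : 0 ≤ d1) (hd2 : 0 ≤ d2)
    (h1 : ∀ s, 0 ≤ N1 s) (h2 : ∀ s, 0 ≤ N2 s) (h10 : N1 0 = 1) (h20 : N2 0 = 1)
    (h11 : N1 1 = d1) (h21 : N2 1 = d2) (hg1 : ∀ s, N1 (s + 1) ≤ d1 * N1 s)
    (hg2 : ∀ s, N2 (s + 1) ≤ d2 * N2 s) (s : ℕ) (hs : 1 ≤ s) :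
    ∃ θ : ℝ, 0 ≤ θ ∧ θ ≤ 1 ∧
      (d1 + d2) * ∑ p ∈ antidiagonal s,
        ((1 - θ) * (if p.2 = 0 then 1 else 0) + θ * (if p.1 = 0 then 0 else 1)) *
          (N1 p.1 * N2 p.2) = d1 * ∑ p ∈ antidiagonal s, N1 p.1 * N2 p.2 := by
  obtain ⟨s, rfl⟩ : ∃ k, s = k + 1 := ⟨s - 1, by omega⟩
  set T := ∑ p ∈ antidiagonal (s + 1), N1 p.1 * N2 p.2 with hT
  have hb1 := hall_bound N1 N2 d1 d2 hd1 hd2 h1 h2 h20 h21 hg1 s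
  have hb2 := hall_bound N2 N1 d2 d1 hd2 hd1 h2 h1 h10 h11 hg2 s
  have hT2 : ∑ p ∈ antidiagonal (s + 1), N2 p.1 * N1 p.2 = T := by
    rw [hT, ← Finset.Nat.sum_antidiagonal_swap]
    exact Finset.sum_congr rfl fun p _ => mul_comm _ _
  rw [hT2] at hb2
  obtain ⟨θ, ht0, ht1, ht⟩ := interp (N1 (s + 1)) (T - N2 (s + 1)) (d1 * T) (d1 + d2) hb1
    (by linarith)
  refine ⟨θ, ht0, ht1, ?_⟩
  rw [← ht]
  congr 1
  have e1 : ∑ p ∈ antidiagonal (s + 1), (if p.2 = 0 then (1:ℝ) else 0) * (N1 p.1 * N2 p.2)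
      = N1 (s + 1) := by
    rw [Finset.Nat.sum_antidiagonal_succ']
    simp [h20]
  have e2 : ∑ p ∈ antidiagonal (s + 1), (if p.1 = 0 then (0:ℝ) else 1) * (N1 p.1 * N2 p.2)
      = T - N2 (s + 1) := by
    rw [hT, Finset.Nat.sum_antidiagonal_succ, Finset.Nat.sum_antidiagonal_succ]
    simp [h10]
  rw [← e1, ← e2, Finset.mul_sum, Finset.mul_sum, ← Finset.sum_add_distrib]
  exact Finset.sum_congr rfl fun p _ => by ring

lemma reg_prod {V W : Type*} [Fintype V] [Fintype W] {E : V → V → Prop}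
    {F : W → W → Prop} {d1 d2 : ℕ} (hE : ∀ v, ¬ E v v)
    (h1 : IsRegular E d1) (h2 : IsRegular F d2) : IsRegular (prodE E F) (d1 + d2) := by
  rintro ⟨a, b⟩
  have i1 : Function.Injective (fun x : V => (x, b)) := fun x y h => (Prod.ext_iff.1 h).1
  have i2 : Function.Injective (fun x : W => (a, x)) := fun x y h => (Prod.ext_iff.1 h).2
  constructor
  · rw [← (h1 a).1, ← (h2 b).1, ← Set.ncard_image_of_injective _ i1,
      ← Set.ncard_image_of_injective _ i2, ← Set.ncard_union_eq]
    · congr 1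
      ext ⟨x, y⟩
      simp only [prodE, Set.mem_ofPred_eq, Set.mem_union, Set.mem_image, Prod.mk.injEq, eq_comm]
      simp [and_comm]
    · rw [Set.disjoint_left]
      rintro _ ⟨x, hx, rfl⟩ ⟨y, hy, hxy⟩
      obtain ⟨rfl, -⟩ := Prod.ext_iff.1 hxy
      exact hE _ hx
  · rw [← (h1 a).2, ← (h2 b).2, ← Set.ncard_image_of_injective _ i1,
      ← Set.ncard_image_of_injective _ i2, ← Set.ncard_union_eq]
    · congr 1
      ext ⟨x, y⟩
      simp only [prodE, Set.mem_ofPred_eq, Set.mem_union, Set.mem_image, Prod.mk.injEq, eq_comm]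
      simp [and_comm]
    · rw [Set.disjoint_left]
      rintro _ ⟨x, hx, rfl⟩ ⟨y, hy, hxy⟩
      obtain ⟨rfl, -⟩ := Prod.ext_iff.1 hxy
      exact hE _ hx

lemma growth {V : Type*} [Fintype V] [Nonempty V] {E : V → V → Prop} {d : ℕ}
    (hs : ∀ v, ¬ E v v) (hsc : StronglyConnected E) (hreg : IsRegular E d)
    {N : ℕ → ℝ} {f : V → V → V → ℝ}
    (h1 : ∀ u s, ((univ.filter (fun v => dist E u v = s)).card : ℝ) = N s)
    (h2 : ∀ u v w, 0 ≤ f u v w)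
    (h3 : ∀ u v w, f u v w ≠ 0 → E u w ∧ dist E u v = dist E w v + 1)
    (h4 : ∀ u v, u ≠ v → ∑ w, f u v w = 1)
    (h5 : ∀ u w, E u w → ∀ s, 1 ≤ s →
      (d : ℝ) * ∑ v ∈ univ.filter (fun v => dist E u v = s), f u v w = N s) :
    (∀ s, 0 ≤ N s) ∧ N 0 = 1 ∧ N 1 = d ∧ ∀ s, N (s + 1) ≤ d * N s := by
  have u : V := Classical.arbitrary V
  have hnn : ∀ s, 0 ≤ N s := fun s => by rw [← h1 u s]; positivity
  refine ⟨hnn, ?_, ?_, fun s => ?_⟩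
  · rw [← h1 u 0]
    have : univ.filter (fun v => dist E u v = 0) = {u} := by
      ext v; simp [dist_eq_zero hsc, eq_comm]
    simp [this]
  · rw [← h1 u 1, ← (hreg u).1, Set.ncard_eq_toFinset_card']
    congr 2
    ext v
    simp [dist_eq_one hsc hs]
  · by_cases hz : N (s + 1) = 0
    · rw [hz]; exact mul_nonneg (Nat.cast_nonneg _) (hnn s)
    · rw [← h1 u] at hz
      have hz' : (univ.filter (fun v => dist E u v = s + 1)).Nonempty := by
        rw [← Finset.card_pos]
        exact Nat.pos_of_ne_zero (by exact_mod_cast hz)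
      obtain ⟨v, hv⟩ := hz'
      obtain ⟨w, hw, -⟩ := exists_edge_of_dist hsc (by simpa using hv : dist E u v = s + 1)
      rw [← h5 u w hw (s + 1) (by omega)]
      refine mul_le_mul_of_nonneg_left ?_ (Nat.cast_nonneg _)
      rw [← h1 w s, ← Finset.sum_boole, Finset.sum_filter]
      refine Finset.sum_le_sum fun v _ => ?_
      split_ifs with ha hb hb
      · have huv : u ≠ v := by
          rintro rfl
          rw [dist_self] at ha
          omega
        rw [← h4 u v huv]
        exact Finset.single_le_sum (f := fun w => f u v w) (fun w _ => h2 u v w) (mem_univ w)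
      · by_contra hc
        have := (h3 u v w (by intro h0; simp [h0] at hc)).2
        omega
      · exact zero_le_one
      · exact le_rfl

end Good

section Prod

open Finset
open scoped Classical

lemma good_prod {V W : Type*} [Fintype V] [Fintype W] [Nonempty V] [Nonempty W]
    {E : V → V → Prop} {F : W → W → Prop} {d1 d2 : ℕ} (hE : Good E d1) (hF : Good F d2) :
    Good (prodE E F) (d1 + d2) := by
  obtain ⟨N1, f1, a1, a2, a3, a4, a5⟩ := hE.ex
  obtain ⟨N2, f2, b1, b2, b3, b4, b5⟩ := hF.ex
  obtain ⟨n1, n10, n11, g1⟩ := growth hE.simple hE.sc hE.reg a1 a2 a3 a4 a5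
  obtain ⟨n2, n20, n21, g2⟩ := growth hF.simple hF.sc hF.reg b1 b2 b3 b4 b5
  have hex : ∀ s, ∃ θ : ℝ, 0 ≤ θ ∧ θ ≤ 1 ∧ (1 ≤ s → 
      ((d1 : ℝ) + d2) * ∑ p ∈ antidiagonal s,
        ((1 - θ) * (if p.2 = 0 then 1 else 0) + θ * (if p.1 = 0 then 0 else 1)) *
          (N1 p.1 * N2 p.2) = d1 * ∑ p ∈ antidiagonal s, N1 p.1 * N2 p.2) := by
    intro s
    by_cases hs : 1 ≤ s
    · obtain ⟨θ, h0, h1, h⟩ := exists_theta N1 N2 d1 d2 (Nat.cast_nonneg _) (Nat.cast_nonneg _)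
        n1 n2 n10 n20 n11 n21 g1 g2 s hs
      exact ⟨θ, h0, h1, fun _ => h⟩
    · exact ⟨0, le_rfl, zero_le_one, fun h => absurd h hs⟩
  choose θ t0 t1 ht using hex
  set L : ℕ → ℕ → ℝ := fun a b =>
    (1 - θ (a + b)) * (if b = 0 then 1 else 0) + θ (a + b) * (if a = 0 then 0 else 1) with hL
  have L0 : ∀ a b, 0 ≤ L a b := fun a b => by
    have := t0 (a + b); have := t1 (a + b)
    simp only [hL]
    refine add_nonneg (mul_nonneg (by linarith) ?_) (mul_nonneg (by linarith) ?_) <;>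
    split_ifs <;> norm_num
  have L1 : ∀ a b, L a b ≤ 1 := fun a b => by
    have := t0 (a + b); have := t1 (a + b)
    simp only [hL]
    split_ifs <;> linarith
  have La0 : ∀ a, a ≠ 0 → L a 0 = 1 := fun a ha => by simp [hL, ha]
  have L0b : ∀ b, b ≠ 0 → L 0 b = 0 := fun b hb => by simp [hL, hb]
  have hT1 : ∀ s, 1 ≤ s → ((d1 : ℝ) + d2) * ∑ p ∈ antidiagonal s, L p.1 p.2 * (N1 p.1 * N2 p.2)
      = d1 * ∑ p ∈ antidiagonal s, N1 p.1 * N2 p.2 := by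
    intro s hs
    rw [← ht s hs]
    congr 1
    refine Finset.sum_congr rfl fun p hp => ?_
    have : p.1 + p.2 = s := by simpa using hp
    simp only [hL, this]
  have hT2 : ∀ s, 1 ≤ s →
      ((d1 : ℝ) + d2) * ∑ p ∈ antidiagonal s, (1 - L p.1 p.2) * (N1 p.1 * N2 p.2)
      = d2 * ∑ p ∈ antidiagonal s, N1 p.1 * N2 p.2 := by
    intro s hs
    have h := hT1 s hs
    have : ∑ p ∈ antidiagonal s, (1 - L p.1 p.2) * (N1 p.1 * N2 p.2) =
        ∑ p ∈ antidiagonal s, N1 p.1 * N2 p.2 -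
        ∑ p ∈ antidiagonal s, L p.1 p.2 * (N1 p.1 * N2 p.2) := by
      rw [← Finset.sum_sub_distrib]
      exact Finset.sum_congr rfl fun p _ => by ring
    rw [this]
    linear_combination -h
  have hdist := dist_prod hE.sc hF.sc
  have f1s : ∀ u w, f1 u u w = 0 := fun u w => by
    by_contra h
    have := (a3 _ _ _ h).2
    rw [dist_self] at this
    omega
  have f2s : ∀ u w, f2 u u w = 0 := fun u w => by
    by_contra h
    have := (b3 _ _ _ h).2
    rw [dist_self] at this
    omega
  have posd : ∀ u w, E u w → (d1 : ℝ) ≠ 0 := fun u w h h0 => by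
    have h1 := (hE.reg u).1
    rw [Nat.cast_eq_zero.1 h0, Set.ncard_eq_zero] at h1
    have : w ∈ {w | E u w} := h
    rw [h1] at this
    exact this
  have posd2 : ∀ u w, F u w → (d2 : ℝ) ≠ 0 := fun u w h h0 => by
    have h1 := (hF.reg u).1
    rw [Nat.cast_eq_zero.1 h0, Set.ncard_eq_zero] at h1
    have : w ∈ {w | F u w} := h
    rw [h1] at this
    exact this
  refine ⟨?_, sc_prod hE.sc hF.sc, reg_prod hE.simple hE.reg hF.reg,
    fun s => ∑ p ∈ antidiagonal s, N1 p.1 * N2 p.2,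
    fun u v w =>
      (if w.2 = u.2 then L (dist E u.1 v.1) (dist F u.2 v.2) * f1 u.1 v.1 w.1 else 0) +
      (if w.1 = u.1 then (1 - L (dist E u.1 v.1) (dist F u.2 v.2)) * f2 u.2 v.2 w.2 else 0),
    ?_, ?_, ?_, ?_, ?_⟩
  · rintro ⟨a, b⟩ (⟨h, -⟩ | ⟨-, h⟩)
    · exact hE.simple _ h
    · exact hF.simple _ h
  · intro u s
    have := sum_prod_dist (fun v => dist E u.1 v) (fun v => dist F u.2 v) (fun _ _ => 1)
      (fun _ => 1) (fun _ => 1) s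
    simp only [one_mul, Finset.sum_const, nsmul_eq_mul, mul_one, a1, b1] at this
    beta_reduce
    rw [← this]
    simp only [hdist]
  · intro u v w
    refine add_nonneg ?_ ?_
    · split_ifs
      · exact mul_nonneg (L0 _ _) (a2 _ _ _)
      · exact le_rfl
    · split_ifs
      · exact mul_nonneg (sub_nonneg.2 (L1 _ _)) (b2 _ _ _)
      · exact le_rfl
  · intro u v w hne
    beta_reduce at hne
    rw [hdist, hdist]
    by_cases h1 : (if w.2 = u.2 then L (dist E u.1 v.1) (dist F u.2 v.2) * f1 u.1 v.1 w.1 else 0) = 0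
    · rw [h1, zero_add] at hne
      split_ifs at hne with h2
      · have := b3 _ _ _ (right_ne_zero_of_mul hne)
        refine ⟨Or.inr ⟨h2.symm, this.1⟩, ?_⟩
        rw [h2, this.2]; ring
      · exact absurd rfl hne
    · split_ifs at h1 with h2
      · have := a3 _ _ _ (right_ne_zero_of_mul h1)
        refine ⟨Or.inl ⟨this.1, h2.symm⟩, ?_⟩
        rw [h2, this.2]; ring
      · exact absurd rfl h1
  · intro u v huv
    beta_reduce
    rw [Finset.sum_add_distrib]
    have s1 : ∑ w : V × W, (if w.2 = u.2 then L (dist E u.1 v.1) (dist F u.2 v.2) * f1 u.1 v.1 w.1 else 0) = L (dist E u.1 v.1) (dist F u.2 v.2) * ∑ w, f1 u.1 v.1 w := by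
      rw [Fintype.sum_prod_type, Finset.mul_sum]
      simp
    have s2 : ∑ w : V × W, (if w.1 = u.1 then (1 - L (dist E u.1 v.1) (dist F u.2 v.2)) * f2 u.2 v.2 w.2 else 0) = (1 - L (dist E u.1 v.1) (dist F u.2 v.2)) * ∑ w, f2 u.2 v.2 w := by
      rw [Fintype.sum_prod_type_right, Finset.mul_sum]
      simp
    rw [s1, s2]
    by_cases h1 : u.1 = v.1
    · have h2 : u.2 ≠ v.2 := fun h2 => huv (Prod.ext h1 h2)
      rw [b4 _ _ h2, h1, dist_self, L0b _ (fun h => h2 ((dist_eq_zero hF.sc).1 h))]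
      ring
    · by_cases h2 : u.2 = v.2
      · rw [a4 _ _ h1, h2, dist_self, La0 _ (fun h => h1 ((dist_eq_zero hE.sc).1 h))]
        ring
      · rw [a4 _ _ h1, b4 _ _ h2]; ring
  · rintro ⟨u1, u2⟩ ⟨w1, w2⟩ (⟨he, h2⟩ | ⟨h2, he⟩) s hs
    · simp only at he h2
      subst h2
      have hw : w1 ≠ u1 := fun h => hE.simple _ (h ▸ he)
      simp only [if_true, hw, if_false, add_zero, hdist]
      have := sum_prod_dist (fun v => dist E u1 v) (fun v => dist F u2 v) L
        (fun v => f1 u1 v w1) (fun _ => 1) s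
      simp only [mul_one, Finset.sum_const, nsmul_eq_mul, b1] at this
      rw [this]
      have hd := posd _ _ he
      apply mul_left_cancel₀ hd
      rw [← hT1 s hs, Nat.cast_add, mul_left_comm, Finset.mul_sum]
      congr 1
      refine Finset.sum_congr rfl fun p hp => ?_
      have hp : p.1 + p.2 = s := by simpa using hp
      by_cases h0 : p.1 = 0
      · rw [h0, L0b _ (by omega)]; ring
      · rw [← a5 u1 w1 he p.1 (by omega)]; ring
    · simp only at he h2
      subst h2
      have hw : w2 ≠ u2 := fun h => hF.simple _ (h ▸ he)
      simp only [if_true, hw, if_false, zero_add, hdist]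
      have := sum_prod_dist (fun v => dist E u1 v) (fun v => dist F u2 v) (fun a b => 1 - L a b)
        (fun _ => 1) (fun v => f2 u2 v w2) s
      simp only [mul_one, one_mul, Finset.sum_const, nsmul_eq_mul, a1] at this
      rw [this]
      have hd := posd2 _ _ he
      apply mul_left_cancel₀ hd
      rw [← hT2 s hs, Nat.cast_add, mul_left_comm, Finset.mul_sum]
      congr 1
      refine Finset.sum_congr rfl fun p hp => ?_
      have hp : p.1 + p.2 = s := by simpa using hp
      by_cases h0 : p.2 = 0
      · rw [h0, La0 _ (by omega)]; ring
      · rw [← b5 u2 w2 he p.2 (by omega)]; ring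

lemma good_box {n : ℕ} (V : Fin n → Type) [∀ i, Fintype (V i)] [∀ i, Nonempty (V i)]
    (E : ∀ i, V i → V i → Prop) (d : Fin n → ℕ) (h : ∀ i, Good (E i) (d i)) :
    Good (boxE E) (∑ i, d i) := by
  induction n with
  | zero =>
    have hE : ∀ u v, ¬ boxE E u v := fun u v ⟨j, _⟩ => j.elim0
    have hd : ∀ u v, dist (boxE E) u v = 0 := fun u v => by
      rw [Subsingleton.elim u v, dist_self]
    refine ⟨fun v => hE v v, fun u v => ⟨0, hasWalk_zero.2 (Subsingleton.elim _ _)⟩,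
      fun v => ?_, fun s => if s = 0 then 1 else 0, fun _ _ _ => 0, ?_, ?_, ?_, ?_, ?_⟩
    · simp [hE]
    · intro u s
      by_cases hs : s = 0
      · simp [hd, hs]
      · simp [hd, hs, Ne.symm hs]
    · intro u v w; exact le_rfl
    · intro u v w h; exact absurd rfl h
    · intro u v h; exact absurd (Subsingleton.elim _ _) h
    · intro u w h; exact absurd h (hE _ _)
  | succ n ih =>
    have hg := good_prod (h 0) (ih (fun i => V i.succ) (fun i => E i.succ) (fun i => d i.succ)
      (fun i => h i.succ))
    rw [Fin.sum_univ_succ]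
    refine good_equiv (Fin.consEquiv V) ?_ hg
    rintro ⟨a, a'⟩ ⟨b, b'⟩
    simp only [prodE, boxE, Fin.consEquiv_apply, Fin.exists_fin_succ, Fin.forall_fin_succ,
      Fin.cons_zero, Fin.cons_succ]
    constructor
    · rintro (⟨h, rfl⟩ | ⟨rfl, j, h, hk⟩)
      · exact Or.inl ⟨h, by simp, fun _ _ => rfl⟩
      · exact Or.inr ⟨j, h, fun _ => rfl, fun k hkj => hk k (fun h => hkj (by rw [h]))⟩
    · rintro (⟨h, -, hk⟩ | ⟨j, h, h0, hk⟩)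
      · exact Or.inl ⟨h, funext fun k => hk k (Fin.succ_ne_zero k)⟩
      · exact Or.inr ⟨h0 (Fin.succ_ne_zero j).symm, j, h,
          fun k hkj => hk k (fun h => hkj (Fin.succ_injective _ h))⟩

end Prod

section Extract

open Finset
open scoped Classical

lemma sum_card_levels {V : Type*} [Fintype V] {E : V → V → Prop}
    (hsc : StronglyConnected E) (u : V) :
    ∑ t ∈ Icc 1 (diam E), ((univ.filter (fun v => dist E u v = diam E + 1 - t)).card : ℝ)
      = (Nat.card V : ℝ) - 1 := by
  have h := Finset.card_eq_sum_card_fiberwise (s := univ.filter (fun v : V => u ≠ v))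
    (f := fun v => diam E + 1 - dist E u v) (t := Icc 1 (diam E)) (by
      intro v hv
      have hv : u ≠ v := by simpa using hv
      have h1 := dist_le_diam (E := E) u v
      have h2 : dist E u v ≠ 0 := fun h => hv ((dist_eq_zero hsc).1 h)
      simp only [coe_Icc, Set.mem_Icc]
      omega)
  have h0 : (univ.filter (fun v : V => u ≠ v)).card + 1 = Nat.card V := by
    rw [Nat.card_eq_fintype_card, ← Finset.card_univ, Finset.filter_ne, Finset.card_erase_add_one
      (mem_univ u)]
  rw [← h0, h]
  push_cast
  rw [add_sub_cancel_right]
  refine Finset.sum_congr rfl fun t ht => ?_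
  rw [mem_Icc] at ht
  congr 2
  ext v
  simp only [mem_filter, mem_univ, true_and]
  have h1 := dist_le_diam (E := E) u v
  have h2 := dist_eq_zero (u := u) (v := v) hsc
  constructor
  · intro h
    exact ⟨fun h3 => by rw [h2.2 h3] at h; omega, by omega⟩
  · rintro ⟨h3, h4⟩; omega

lemma exists_edge {V : Type*} {E : V → V → Prop} (hcard : 2 ≤ Nat.card V)
    (hsc : StronglyConnected E) : ∃ u w, E u w ∧ dist E u w = 1 ∧ u ≠ w := by
  have hf : Finite V := Nat.finite_of_card_ne_zero (by omega)
  have hnt : Nontrivial V := Finite.one_lt_card_iff_nontrivial.1 (by omega)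
  obtain ⟨a, b, hab⟩ := exists_pair_ne V
  have key : ∀ s a, dist E a b = s + 1 → ∃ a, dist E a b = 1 := by
    intro s
    induction s with
    | zero => exact fun a h => ⟨a, h⟩
    | succ s ih =>
      intro a h
      obtain ⟨w, -, hw⟩ := exists_edge_of_dist hsc h
      exact ih w hw
  have h0 : dist E a b ≠ 0 := fun h => hab ((dist_eq_zero hsc).1 h)
  obtain ⟨u, hu⟩ := key (dist E a b - 1) a (by omega)
  obtain ⟨w, hw, hw0⟩ := exists_edge_of_dist hsc (s := 0) hu
  rw [dist_eq_zero hsc] at hw0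
  subst hw0
  exact ⟨u, w, hw, hu, fun h => by rw [h, dist_self] at hu; omega⟩

lemma tmax_eq {V : Type*} [Finite V] {E : V → V → Prop} (hcard : 2 ≤ Nat.card V)
    (hsc : StronglyConnected E) {A : Sched V} (hsp : IsShortestPathSched E A) :
    tmax A = diam E := by
  have hb : ∀ t ∈ {t | ∃ p ∈ A, p.2.2.2 = t}, t ≤ diam E := by
    rintro t ⟨⟨v, C, ⟨u, w⟩, t'⟩, hp, rfl⟩
    have := hsp.1 v C u w t' hp
    simp only
    omega
  obtain ⟨u, w, he, h1, -⟩ := exists_edge hcard hsc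
  obtain ⟨C, hC⟩ := hsp.2 w u w (diam E) he (by rw [dist_self, h1]) (by omega)
  apply le_antisymm
  · exact csSup_le ⟨_, _, hC, rfl⟩ hb
  · exact le_csSup ⟨_, hb⟩ ⟨_, hC, rfl⟩

lemma out_card {V : Type*} [Fintype V] {E : V → V → Prop} {d : ℕ} (h : IsRegular E d) (u : V) :
    (univ.filter (fun w => E u w)).card = d := by
  rw [← (h u).1, Set.ncard_eq_toFinset_card']
  congr 1
  ext v
  simp

lemma good_of_sched {V : Type*} [Fintype V] {E : V → V → Prop} {d : ℕ}
    (hcard : 2 ≤ Nat.card V) (hs : ∀ v, ¬ E v v) (hsc : StronglyConnected E)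
    (hreg : IsRegular E d) {M B : ℝ} (hM : 0 < M) (hB : 0 < B) {A : Sched V}
    (hA : IsSched E A) (hrs : IsReduceScatter A) (hsp : IsShortestPathSched E A)
    (hbw : bwT E d M B A = (M / B) * (((Nat.card V : ℝ) - 1) / (Nat.card V : ℝ))) :
    Good E d := by
  refine ⟨hs, hsc, hreg, ?_⟩
  have hNpos : (0 : ℝ) < Nat.card V := by
    have : 0 < Nat.card V := by omega
    exact_mod_cast this
  obtain ⟨u0, -, -⟩ := exists_edge hcard hsc
  set S : Finset (Tup V) := hA.1.toFinset with hS
  have memS : ∀ p, p ∈ S ↔ p ∈ A := fun p => by simp [hS]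
  set D := diam E with hD
  set f : V → V → V → ℝ := fun u v w =>
    ∑ p ∈ S.filter (fun p => p.1 = v ∧ p.2.2.1 = (u, w)), (volume p.2.1).toReal with hf
  have f0 : ∀ u v w, 0 ≤ f u v w := fun u v w =>
    Finset.sum_nonneg fun p _ => ENNReal.toReal_nonneg
  have fsupp : ∀ u v w, f u v w ≠ 0 → E u w ∧ dist E u v = dist E w v + 1 := by
    intro u v w h
    obtain ⟨⟨v', C, e, t⟩, hp, -⟩ := Finset.exists_ne_zero_of_sum_ne_zero h
    simp only [mem_filter, memS] at hp
    obtain ⟨hp, rfl, rfl⟩ := hp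
    exact ⟨(hA.2 _ hp).1, (hsp.1 _ _ _ _ _ hp).1⟩
  -- loads
  have hload : ∀ u w t, 1 ≤ t → t ≤ D → edgeLoad A (u, w) t =
      ∑ v ∈ univ.filter (fun v => dist E u v = D + 1 - t), f u v w := by
    intro u w t ht1 htD
    have e1 : {p : Tup V | p ∈ A ∧ p.2.2.1 = (u, w) ∧ p.2.2.2 = t} =
        ↑(S.filter (fun p => p.2.2.1 = (u, w) ∧ p.2.2.2 = t)) := by
      ext p; simp [memS]
    unfold edgeLoad
    rw [e1, finsum_mem_coe_finset, ← Finset.sum_fiberwise_of_maps_to (g := fun p : Tup V => p.1)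
      (t := univ.filter (fun v => dist E u v = D + 1 - t))]
    · refine Finset.sum_congr rfl fun v hv => ?_
      simp only [hf, Finset.filter_filter]
      refine Finset.sum_congr ?_ fun _ _ => rfl
      ext ⟨v', C, e, t'⟩
      simp only [mem_filter, memS, mem_univ, true_and] at hv ⊢
      constructor
      · rintro ⟨h1, ⟨h2, h3⟩, h4⟩; exact ⟨h1, h4, h2⟩
      · rintro ⟨h1, rfl, rfl⟩
        have := (hsp.1 _ _ _ _ _ h1).2
        exact ⟨h1, ⟨rfl, by omega⟩, rfl⟩
    · rintro ⟨v', C, e, t'⟩ hp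
      simp only [mem_filter, memS, mem_univ, true_and] at hp ⊢
      obtain ⟨h1, rfl, rfl⟩ := hp
      have := (hsp.1 _ _ _ _ _ h1).2
      omega
  -- covering
  have hcov : ∀ u v, u ≠ v → 1 ≤ ∑ w, f u v w := by
    intro u v huv
    have e1 : ∑ w, f u v w =
        ∑ p ∈ S.filter (fun p => p.1 = v ∧ p.2.2.1.1 = u), volume.real p.2.1 := by
      rw [← Finset.sum_fiberwise_of_maps_to (g := fun p : Tup V => p.2.2.1.2) (t := univ)
        (fun _ _ => mem_univ _)]
      refine Finset.sum_congr rfl fun w _ => ?_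
      simp only [hf, Finset.filter_filter, Measure.real]
      refine Finset.sum_congr ?_ fun _ _ => rfl
      ext p
      simp only [mem_filter, Prod.ext_iff, and_assoc]
    rw [e1]
    refine le_trans ?_ (measureReal_biUnion_finset_le _ _)
    have hsub : shard ⊆ ⋃ p ∈ S.filter (fun p => p.1 = v ∧ p.2.2.1.1 = u), p.2.1 := by
      intro x hx
      obtain ⟨m, w, C, t, h0, h1, -, h⟩ := hrs u v huv x hx
      have hm : m ≠ 0 := by
        rintro rfl
        exact huv (h0.symm.trans h1)
      obtain ⟨m, rfl⟩ := Nat.exists_eq_succ_of_ne_zero hm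
      obtain ⟨h2, h3⟩ := h 0
      simp only [Set.mem_iUnion]
      refine ⟨(v, C 0, (w (Fin.castSucc 0), w (Fin.succ 0)), t 0), ?_, h3⟩
      simp only [mem_filter, memS]
      exact ⟨h2, trivial, h0⟩
    have hsh : volume.real shard = 1 := by simp [shard]
    rw [← hsh]
    refine measureReal_mono hsub (ne_of_lt ?_)
    refine lt_of_le_of_lt (measure_mono (t := shard) ?_) (by simp [shard])
    refine Set.iUnion₂_subset fun p hp => ?_
    simp only [mem_filter, memS] at hp
    exact (hA.2 p hp.1).2.1
  -- sup
  set L : ℕ → ℝ := fun t => sSup ((fun e => edgeLoad A e t) '' {e : V × V | E e.1 e.2}) with hL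
  have hLge : ∀ u w t, E u w → edgeLoad A (u, w) t ≤ L t := fun u w t h =>
    le_csSup (Set.toFinite _).bddAbove ⟨(u, w), h, rfl⟩
  have hsumL : ∑ t ∈ Icc 1 D, (d : ℝ) * L t = (Nat.card V : ℝ) - 1 := by
    unfold bwT stepT at hbw
    rw [tmax_eq hcard hsc hsp, ← Finset.mul_sum] at hbw
    rw [← Finset.mul_sum]
    field_simp at hbw
    linarith
  have hout : ∀ u v, ∑ w ∈ univ.filter (fun w => E u w), f u v w = ∑ w, f u v w := by
    intro u v
    rw [Finset.sum_filter]
    refine Finset.sum_congr rfl fun w _ => ?_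
    split_ifs with h
    · rfl
    · by_contra h0
      exact h (fsupp u v w (Ne.symm h0)).1
  have hchain1 : ∀ u t, ((univ.filter (fun v => dist E u v = D + 1 - t)).card : ℝ) =
      ∑ v ∈ univ.filter (fun v => dist E u v = D + 1 - t), (1 : ℝ) := by
    intro u t; simp
  have hle1 : ∀ u t, t ∈ Icc 1 D → ∀ v ∈ univ.filter (fun v => dist E u v = D + 1 - t),
      (1 : ℝ) ≤ ∑ w, f u v w := by
    intro u t ht v hv
    rw [mem_Icc] at ht
    simp only [mem_filter, mem_univ, true_and] at hv
    apply hcov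
    rintro rfl
    rw [dist_self] at hv
    omega
  have hmid : ∀ u t, t ∈ Icc 1 D → ∑ v ∈ univ.filter (fun v => dist E u v = D + 1 - t),
      ∑ w, f u v w = ∑ w ∈ univ.filter (fun w => E u w), edgeLoad A (u, w) t := by
    intro u t ht
    rw [mem_Icc] at ht
    rw [Finset.sum_congr rfl (fun v _ => (hout u v).symm), Finset.sum_comm]
    exact Finset.sum_congr rfl fun w _ => (hload u w t ht.1 ht.2).symm
  have hdL : ∀ u t, (d : ℝ) * L t = ∑ w ∈ univ.filter (fun w => E u w), L t := by
    intro u t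
    rw [Finset.sum_const, out_card hreg, nsmul_eq_mul]
  have hle2 : ∀ u t, ∑ w ∈ univ.filter (fun w => E u w), edgeLoad A (u, w) t ≤ d * L t := by
    intro u t
    rw [hdL u]
    exact Finset.sum_le_sum fun w hw => hLge _ _ _ (by simpa using hw)
  have hle3 : ∀ u t, t ∈ Icc 1 D → ((univ.filter (fun v => dist E u v = D + 1 - t)).card : ℝ) ≤
      ∑ w ∈ univ.filter (fun w => E u w), edgeLoad A (u, w) t := by
    intro u t ht
    rw [← hmid u t ht, hchain1]
    exact Finset.sum_le_sum (hle1 u t ht)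
  have hEq : ∀ u t, t ∈ Icc 1 D →
      ((univ.filter (fun v => dist E u v = D + 1 - t)).card : ℝ) = d * L t := by
    intro u
    refine (Finset.sum_eq_sum_iff_of_le fun t ht => (hle3 u t ht).trans (hle2 u t)).1 ?_
    rw [hsumL, sum_card_levels hsc]
  have hNu : ∀ u s, ((univ.filter (fun v => dist E u v = s)).card : ℝ) =
      (univ.filter (fun v => dist E u0 v = s)).card := by
    intro u s
    by_cases h0 : s = 0
    · subst h0
      have : ∀ u, univ.filter (fun v => dist E u v = 0) = {u} := by
        intro u; ext v; simp [dist_eq_zero hsc, eq_comm]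
      simp [this]
    by_cases hsD : s ≤ D
    · have h1 := hEq u (D + 1 - s) (by rw [mem_Icc]; omega)
      have h2 := hEq u0 (D + 1 - s) (by rw [mem_Icc]; omega)
      rw [show D + 1 - (D + 1 - s) = s by omega] at h1 h2
      rw [h1, h2]
    · have : ∀ u, univ.filter (fun v => dist E u v = s) = ∅ := by
        intro u
        ext v
        have := dist_le_diam (E := E) u v
        simp
        omega
      simp [this]
  refine ⟨fun s => (univ.filter (fun v => dist E u0 v = s)).card, f, hNu, f0, fsupp, ?_, ?_⟩
  · intro u v huv
    have h1 := dist_le_diam (E := E) u v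
    have h2 : dist E u v ≠ 0 := fun h => huv ((dist_eq_zero hsc).1 h)
    have ht : D + 1 - dist E u v ∈ Icc 1 D := by rw [mem_Icc]; omega
    have := (Finset.sum_eq_sum_iff_of_le (hle1 u _ ht)).1 (by
      rw [← hchain1, hmid u _ ht]
      exact le_antisymm (hle3 u _ ht) (by rw [hEq u _ ht]; exact hle2 u _)) v
      (by simp only [mem_filter, mem_univ, true_and]; omega)
    exact this.symm
  · intro u w huw s hs1
    beta_reduce
    by_cases hsD : s ≤ D
    · have ht : D + 1 - s ∈ Icc 1 D := by rw [mem_Icc]; omega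
      have hts : D + 1 - (D + 1 - s) = s := by omega
      have := (Finset.sum_eq_sum_iff_of_le (s := univ.filter (fun w => E u w))
        (f := fun w => edgeLoad A (u, w) (D + 1 - s)) (g := fun _ => L (D + 1 - s))
        (fun w hw => hLge _ _ _ (by simpa using hw))).1 (by
          rw [← hdL u]
          exact le_antisymm (hle2 u _) (by rw [← hEq u _ ht]; exact hle3 u _ ht)) w
          (by simpa using huw)
      rw [mem_Icc] at ht
      rw [hload u w _ ht.1 ht.2, hts] at this
      rw [this, ← hEq u _ (mem_Icc.2 ht), hts, hNu]
    · have : ∀ u, univ.filter (fun v => dist E u v = s) = ∅ := by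
        intro u
        ext v
        have := dist_le_diam (E := E) u v
        simp
        omega
      simp [this]

end Extract

section Build

open Finset
open scoped Classical

lemma exists_partition {ι : Type*} (g : ι → ℝ) (hg : ∀ i, 0 ≤ g i) (s : Finset ι) :
    ∃ C : ι → Set ℝ, (∀ i ∈ s, MeasurableSet (C i) ∧ C i ⊆ Set.Ico 0 (∑ i ∈ s, g i) ∧
      (volume (C i)).toReal = g i ∧ (g i = 0 → C i = ∅)) ∧
      ∀ x ∈ Set.Ico 0 (∑ i ∈ s, g i), ∃ i ∈ s, x ∈ C i := by
  induction s using Finset.induction_on with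
  | empty => exact ⟨fun _ => ∅, by simp, by simp⟩
  | insert a s ha ih =>
    obtain ⟨C, h1, h2⟩ := ih
    rw [Finset.sum_insert ha]
    have hnn : 0 ≤ ∑ i ∈ s, g i := Finset.sum_nonneg fun i _ => hg i
    refine ⟨Function.update C a (Set.Ico (∑ i ∈ s, g i) (g a + ∑ i ∈ s, g i)), ?_, ?_⟩
    · intro i hi
      by_cases hia : i = a
      · subst hia
        rw [Function.update_self]
        refine ⟨measurableSet_Ico, Set.Ico_subset_Ico_left hnn, ?_, ?_⟩
        · rw [Real.volume_Ico, add_sub_cancel_right, ENNReal.toReal_ofReal (hg i)]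
        · intro h; simp [h]
      · rw [Function.update_of_ne hia]
        obtain ⟨k1, k2, k3, k4⟩ := h1 i (Finset.mem_of_mem_insert_of_ne hi hia)
        exact ⟨k1, k2.trans (Set.Ico_subset_Ico_right (by linarith [hg a])), k3, k4⟩
    · intro x hx
      by_cases hxs : x < ∑ i ∈ s, g i
      · obtain ⟨i, hi, hxi⟩ := h2 x ⟨hx.1, hxs⟩
        refine ⟨i, Finset.mem_insert_of_mem hi, ?_⟩
        rw [Function.update_of_ne (by rintro rfl; exact ha hi)]
        exact hxi
      · refine ⟨a, Finset.mem_insert_self _ _, ?_⟩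
        rw [Function.update_self]
        exact ⟨not_lt.1 hxs, hx.2⟩

lemma sched_of_good {V : Type*} [Fintype V] {E : V → V → Prop} {d : ℕ}
    (hcard : 2 ≤ Nat.card V) {M B : ℝ} (hM : 0 < M) (hB : 0 < B) (hG : Good E d) :
    ∃ A : Sched V, IsSched E A ∧ IsReduceScatter A ∧ IsShortestPathSched E A ∧
      bwT E d M B A = (M / B) * (((Nat.card V : ℝ) - 1) / (Nat.card V : ℝ)) := by
  obtain ⟨N, f, h1, h2, h3, h4, h5⟩ := hG.ex
  have hsc := hG.sc
  have hC : ∀ u v, ∃ C : V → Set ℝ, u ≠ v → (∀ w, MeasurableSet (C w) ∧ C w ⊆ shard ∧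
      (volume (C w)).toReal = f u v w ∧ (f u v w = 0 → C w = ∅)) ∧
      ∀ x ∈ shard, ∃ w, x ∈ C w := by
    intro u v
    obtain ⟨C, k1, k2⟩ := exists_partition (f u v) (h2 u v) univ
    refine ⟨C, fun huv => ?_⟩
    rw [h4 u v huv] at k1 k2
    refine ⟨fun w => k1 w (mem_univ w), fun x hx => ?_⟩
    obtain ⟨w, -, hw⟩ := k2 x hx
    exact ⟨w, hw⟩
  choose C hC using hC
  set D := diam E with hD
  have hdD : ∀ u v, dist E u v ≤ D := fun u v => dist_le_diam u v
  have hne : ∀ u v w, dist E u v = dist E w v + 1 → u ≠ v := by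
    rintro u v w h rfl
    rw [dist_self] at h
    omega
  set A : Sched V := {p | ∃ v u w, E u w ∧ dist E u v = dist E w v + 1 ∧
    p = (v, C u v w, (u, w), D + 1 - dist E u v)} with hA
  have memA : ∀ v c u w t, (v, c, (u, w), t) ∈ A ↔ E u w ∧ dist E u v = dist E w v + 1 ∧
      c = C u v w ∧ t = D + 1 - dist E u v := by
    intro v c u w t
    constructor
    · rintro ⟨v', u', w', k1, k2, k3⟩
      simp only [Prod.mk.injEq] at k3
      obtain ⟨rfl, rfl, ⟨rfl, rfl⟩, rfl⟩ := k3
      exact ⟨k1, k2, rfl, rfl⟩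
    · rintro ⟨k1, k2, rfl, rfl⟩
      exact ⟨v, u, w, k1, k2, rfl⟩
  have hsp : IsShortestPathSched E A := by
    constructor
    · intro v c u w t h
      obtain ⟨k1, k2, -, k4⟩ := (memA _ _ _ _ _).1 h
      have := hdD u v
      exact ⟨k2, by omega⟩
    · intro v u w t k1 k2 k3
      exact ⟨C u v w, (memA _ _ _ _ _).2 ⟨k1, k2, rfl, by omega⟩⟩
  have hsched : IsSched E A := by
    constructor
    · refine (Set.finite_range (fun q : V × V × V =>
        ((q.1, C q.2.1 q.1 q.2.2, (q.2.1, q.2.2), D + 1 - dist E q.2.1 q.1) : Tup V))).subset ?_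
      rintro _ ⟨v, u, w, -, -, rfl⟩
      exact ⟨(v, u, w), rfl⟩
    · rintro _ ⟨v, u, w, k1, k2, rfl⟩
      obtain ⟨c1, c2, -⟩ := (hC u v (hne _ _ _ k2)).1 w
      have := hdD u v
      exact ⟨k1, c2, c1, by simp only; omega⟩
  have hrs : IsReduceScatter A := by
    intro u v huv x hx
    have key : ∀ s u, dist E u v = s → ∃ w : Fin (s + 1) → V, w 0 = u ∧ w (Fin.last s) = v ∧
        ∀ i : Fin s, ∃ c, (v, c, (w i.castSucc, w i.succ), D + 1 - s + i) ∈ A ∧ x ∈ c := by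
      intro s
      induction s with
      | zero =>
        intro u hu
        exact ⟨fun _ => u, rfl, (dist_eq_zero hsc).1 hu, fun i => i.elim0⟩
      | succ s ih =>
        intro u hu
        have huv : u ≠ v := by
          rintro rfl
          rw [dist_self] at hu
          omega
        obtain ⟨k1, k2⟩ := hC u v huv
        obtain ⟨y, hy⟩ := k2 x hx
        have hf : f u v y ≠ 0 := fun h => by
          rw [(k1 y).2.2.2 h] at hy
          exact hy
        obtain ⟨he, hd⟩ := h3 u v y hf
        obtain ⟨w, w0, w1, hw⟩ := ih y (by omega)
        have hs := hdD u v
        refine ⟨Fin.cons u w, rfl, ?_, ?_⟩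
        · rw [← Fin.succ_last, Fin.cons_succ, w1]
        · intro i
          refine Fin.cases ?_ (fun j => ?_) i
          · refine ⟨C u v y, (memA _ _ _ _ _).2 ?_, hy⟩
            simp only [Fin.castSucc_zero, Fin.cons_zero, Fin.cons_succ, w0]
            refine ⟨he, hd, trivial, ?_⟩
            simp only [Fin.val_zero]
            omega
          · obtain ⟨c, hc, hxc⟩ := hw j
            refine ⟨c, ?_, hxc⟩
            rw [← Fin.succ_castSucc, Fin.cons_succ, Fin.cons_succ]
            have : D + 1 - (s + 1) + (j.succ : ℕ) = D + 1 - s + j := by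
              simp only [Fin.val_succ]; omega
            rw [this]
            exact hc
    obtain ⟨w, w0, w1, hw⟩ := key _ u rfl
    choose c hc using hw
    refine ⟨_, w, c, fun i => D + 1 - dist E u v + i, w0, w1, ?_, hc⟩
    intro i j hij
    have : (i : ℕ) < j := hij
    simp only
    omega
  refine ⟨A, hsched, hrs, hsp, ?_⟩
  have hload : ∀ u w t, E u w → 1 ≤ t → t ≤ D → edgeLoad A (u, w) t =
      ∑ v ∈ univ.filter (fun v => dist E u v = D + 1 - t), f u v w := by
    intro u w t he ht1 htD
    set φ : V → Tup V := fun v => (v, C u v w, (u, w), t) with hφ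
    have hinj : Function.Injective φ := fun a b h => (Prod.ext_iff.1 h).1
    set Fs := univ.filter (fun v => dist E u v = D + 1 - t ∧ dist E u v = dist E w v + 1)
    have e1 : {p : Tup V | p ∈ A ∧ p.2.2.1 = (u, w) ∧ p.2.2.2 = t} = ↑(Fs.image φ) := by
      ext ⟨v, c, ⟨u', w'⟩, t'⟩
      simp only [Set.mem_ofPred_eq, memA, coe_image, Set.mem_image, hφ, Prod.mk.injEq, Fs,
        coe_filter, mem_univ, true_and]
      constructor
      · rintro ⟨⟨k1, k2, rfl, k3⟩, ⟨rfl, rfl⟩, rfl⟩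
        have := hdD u' v
        exact ⟨v, ⟨by omega, k2⟩, rfl, rfl, ⟨rfl, rfl⟩, rfl⟩
      · rintro ⟨v', ⟨k1, k2⟩, rfl, rfl, ⟨rfl, rfl⟩, rfl⟩
        exact ⟨⟨he, k2, rfl, by omega⟩, by simp⟩
    unfold edgeLoad
    rw [e1, finsum_mem_coe_finset, Finset.sum_image (fun a _ b _ h => hinj h)]
    have e2 : ∀ v ∈ Fs, (volume (φ v).2.1).toReal = f u v w := by
      intro v hv
      simp only [Fs, mem_filter, mem_univ, true_and] at hv
      exact ((hC u v (hne _ _ _ hv.2)).1 w).2.2.1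
    rw [Finset.sum_congr rfl e2]
    apply Finset.sum_subset
    · intro v hv
      simp only [Fs, mem_filter, mem_univ, true_and] at hv ⊢
      exact hv.1
    · intro v hv hv'
      simp only [Fs, mem_filter, mem_univ, true_and, not_and] at hv hv'
      by_contra h
      exact hv' hv (h3 _ _ _ h).2
  obtain ⟨u0, w0, he0, -⟩ := exists_edge hcard hsc
  have hd0 : (d : ℝ) ≠ 0 := by
    have h := out_card hG.reg u0
    have : 0 < (univ.filter (fun w => E u0 w)).card := Finset.card_pos.2 ⟨w0, by simpa using he0⟩
    rw [h] at this
    exact_mod_cast this.ne'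
  have hLt : ∀ t ∈ Icc 1 D,
      (d : ℝ) * sSup ((fun e => edgeLoad A e t) '' {e : V × V | E e.1 e.2}) =
        ((univ.filter (fun v => dist E u0 v = D + 1 - t)).card : ℝ) := by
    intro t ht
    rw [mem_Icc] at ht
    have : (fun e => edgeLoad A e t) '' {e : V × V | E e.1 e.2} = {N (D + 1 - t) / d} := by
      have hc : ∀ u w, E u w → edgeLoad A (u, w) t = N (D + 1 - t) / d := by
        intro u w he
        rw [hload u w t he ht.1 ht.2, eq_div_iff hd0, mul_comm, h5 u w he _ (by omega)]
      ext y
      constructor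
      · rintro ⟨⟨u, w⟩, he, rfl⟩
        exact hc u w he
      · rintro rfl
        exact ⟨(u0, w0), he0, hc u0 w0 he0⟩
    rw [this, csSup_singleton, h1, mul_div_cancel₀ _ hd0]
  have hsum : ∑ t ∈ Icc 1 D,
      (d : ℝ) * sSup ((fun e => edgeLoad A e t) '' {e : V × V | E e.1 e.2}) =
        (Nat.card V : ℝ) - 1 := by
    rw [Finset.sum_congr rfl hLt, sum_card_levels hsc]
  unfold bwT stepT
  rw [tmax_eq hcard hsc hsp, ← hsum, ← Finset.mul_sum, ← Finset.mul_sum]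
  ring

end Build

/-- if each nontrivial simple strongly connected `d_i`-regular digraph
`G_i` admits a bandwidth optimal shortest-path reduce-scatter schedule, then the
Cartesian product `G₁□⋯□G_n`, which is `(d₁+⋯+d_n)`-regular, admits a bandwidth optimal
shortest-path reduce-scatter schedule. -/
theorem cartesian_product_bw_optimal {n : ℕ} (hn : 1 ≤ n)
    (V : Fin n → Type) [∀ i, Finite (V i)]
    (E : ∀ i, V i → V i → Prop) (d : Fin n → ℕ)
    (hnontriv : ∀ i, 2 ≤ Nat.card (V i))
    (hsimple : ∀ i, ∀ v : V i, ¬ E i v v)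
    (hsc : ∀ i, StronglyConnected (E i))
    (hreg : ∀ i, IsRegular (E i) (d i))
    (M B : ℝ) (hM : 0 < M) (hB : 0 < B)
    (hopt : ∀ i, ∃ A : Sched (V i), IsSched (E i) A ∧ IsReduceScatter A ∧
      IsShortestPathSched (E i) A ∧
      bwT (E i) (d i) M B A
        = (M / B) * (((Nat.card (V i) : ℝ) - 1) / (Nat.card (V i) : ℝ))) :
    IsRegular (boxE E) (∑ i, d i) ∧
    ∃ A : Sched (∀ i, V i), IsSched (boxE E) A ∧ IsReduceScatter A ∧
      IsShortestPathSched (boxE E) A ∧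
      bwT (boxE E) (∑ i, d i) M B A
        = (M / B) * (((Nat.card (∀ i, V i) : ℝ) - 1) / (Nat.card (∀ i, V i) : ℝ)) := by

  have : ∀ i, Fintype (V i) := fun i => Fintype.ofFinite _
  have hne : ∀ i, Nonempty (V i) := fun i => by
    have := hnontriv i
    exact (Nat.card_pos_iff.1 (by omega)).1
  have hg : ∀ i, Good (E i) (d i) := by
    intro i
    obtain ⟨A, h1, h2, h3, h4⟩ := hopt i
    exact good_of_sched (hnontriv i) (hsimple i) (hsc i) (hreg i) hM hB h1 h2 h3 h4
  have hG := good_box V E d hg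
  refine ⟨hG.reg, sched_of_good ?_ hM hB hG⟩
  rw [Nat.card_pi]
  calc 2 ≤ Nat.card (V ⟨0, hn⟩) := hnontriv _
    _ ≤ ∏ i, Nat.card (V i) := Nat.le_of_dvd
      (Finset.prod_pos fun i _ => by have := hnontriv i; omega)
      (Finset.dvd_prod_of_mem (fun i => Nat.card (V i)) (Finset.mem_univ _))

end Collective
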